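/- arXiv:2507.04163 — 3 statements merged into one kernel-verified Lean document; each statement's English description precedes it below -/
import Mathlib

section
/- Under the stated model and sampling scheme, if the likelihood g_y is strictly positive on 𝒳×𝒵 and bounded (‖g_y‖_∞ < ∞), then for every p ≥ 1 there exists a finite constant C (one may take C = 𝒞_p·‖g_y‖_∞/π₀(l_y), where 𝒞_p depends only on p) that is independent of N, M and f, such that for every bounded measurable f : 𝒳 → ℝ, E[|π(f) − π^{N,M}(f)|^p]^{1/p} ≤ C·‖f‖_∞/√N. -/
open MeasureTheory ProbabilityTheory
open scoped ENNReal

noncomputable section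

/-- Joint law of one outer sample `X ~ π₀` together with `M` i.i.d. inner samples
`Z^{1}, …, Z^{M} ~ κ(X, ·)` (conditionally i.i.d. given `X`). -/
def nestedLawOne {𝒳 𝒵 : Type*} [MeasurableSpace 𝒳] [MeasurableSpace 𝒵]
    (π₀ : Measure 𝒳) (κ : Kernel 𝒳 𝒵) (M : ℕ) : Measure (𝒳 × (Fin M → 𝒵)) :=
  π₀.bind fun x => (Measure.dirac x).prod (Measure.pi fun _ : Fin M => κ x)

/-- Joint law of `N` i.i.d. outer samples `X¹, …, X^N ~ π₀`, each carrying its `M`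
conditionally i.i.d. inner samples `Z^{i,1}, …, Z^{i,M} ~ κ(Xⁱ, ·)`. -/
def nestedLaw {𝒳 𝒵 : Type*} [MeasurableSpace 𝒳] [MeasurableSpace 𝒵]
    (π₀ : Measure 𝒳) (κ : Kernel 𝒳 𝒵) (N M : ℕ) : Measure (Fin N → 𝒳 × (Fin M → 𝒵)) :=
  Measure.pi fun _ : Fin N => nestedLawOne π₀ κ M

/-- The approximate likelihood `l_y^M(xⁱ) = (1/M) ∑_j g_y(xⁱ, z^{i,j})` of one outer
sample together with its inner samples. -/
def likeM {𝒳 𝒵 : Type*} (g : 𝒳 × 𝒵 → ℝ) {M : ℕ} (s : 𝒳 × (Fin M → 𝒵)) : ℝ :=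
  (M : ℝ)⁻¹ * ∑ j, g (s.1, s.2 j)

/-- The self-normalised nested importance sampling estimator
`π^{N,M}(f) = ∑_i w^{i,M} f(xⁱ)` with `w^{i,M} = l_y^M(xⁱ) / ∑_j l_y^M(xʲ)`. -/
def nisEstimator {𝒳 𝒵 : Type*} (g : 𝒳 × 𝒵 → ℝ) (f : 𝒳 → ℝ) {N M : ℕ}
    (ω : Fin N → 𝒳 × (Fin M → 𝒵)) : ℝ :=
  (∑ i, likeM g (ω i) * f (ω i).1) / ∑ i, likeM g (ω i)

lemma aux_moment {Ω : Type*} [MeasurableSpace Ω] (μ : Measure Ω) [IsProbabilityMeasure μ]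
    (X : Ω → ℝ) (s : ℝ) (hs : 0 < s) (c : NNReal) (hc : (c : ℝ) = s ^ 2)
    (hX : HasSubgaussianMGF X c μ) (n : ℕ) (hn : 1 ≤ n) :
    eLpNorm X n μ ≤ ENNReal.ofReal ((n.factorial * (2 * Real.exp (1/2))) * s) := by
  set K : ℝ := n.factorial * (2 * Real.exp (1/2)) with hK
  have hK1 : 1 ≤ K := by
    have h1 : (1:ℝ) ≤ n.factorial := by exact_mod_cast Nat.one_le_iff_ne_zero.mpr n.factorial_ne_zero
    have h2 : (1:ℝ) ≤ Real.exp (1/2) := Real.one_le_exp (by norm_num)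
    rw [hK]; nlinarith
  have hn0 : n ≠ 0 := by omega
  have hi1 := hX.integrable_exp_mul (1/s)
  have hi2 := hX.integrable_exp_mul (-(1/s))
  have hm1 := hX.mgf_le (1/s)
  have hm2 := hX.mgf_le (-(1/s))
  have e1 : (c:ℝ) * (1/s)^2/2 = 1/2 := by rw [hc]; field_simp
  have e2 : (c:ℝ) * (-(1/s))^2/2 = 1/2 := by rw [hc]; field_simp
  rw [e1] at hm1
  rw [e2] at hm2
  unfold mgf at hm1 hm2
  have hpt : ∀ ω, ‖X ω‖ₑ ^ n ≤ ENNReal.ofReal (s^n * n.factorial *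
      (Real.exp (1/s * X ω) + Real.exp (-(1/s) * X ω))) := by
    intro ω
    rw [← ofReal_norm, ← ENNReal.ofReal_pow (norm_nonneg _), Real.norm_eq_abs]
    apply ENNReal.ofReal_le_ofReal
    have h := Real.pow_div_factorial_le_exp (x := |X ω| / s) (by positivity) n
    have h' : Real.exp (|X ω| / s) ≤ Real.exp (1/s * X ω) + Real.exp (-(1/s) * X ω) := by
      rcases abs_cases (X ω) with ⟨h, _⟩ | ⟨h, _⟩
      · rw [h, show X ω / s = 1/s * X ω by ring]
        linarith [Real.exp_pos (-(1/s) * X ω)]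
      · rw [h, show -X ω / s = -(1/s) * X ω by ring]
        linarith [Real.exp_pos ((1/s) * X ω)]
    have h3 := h.trans h'
    have hf : (0:ℝ) < n.factorial := by positivity
    rw [div_le_iff₀ hf, div_pow, div_le_iff₀ (by positivity)] at h3
    linarith
  have hint : ∫⁻ ω, ‖X ω‖ₑ ^ n ∂μ ≤ (ENNReal.ofReal (K * s)) ^ n := by
    refine (lintegral_mono hpt).trans ?_
    have hi3 : Integrable (fun ω => s^n * n.factorial *
      (Real.exp (1/s * X ω) + Real.exp (-(1/s) * X ω))) μ := (hi1.add hi2).const_mul _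
    rw [← ofReal_integral_eq_lintegral_ofReal hi3
      (Filter.Eventually.of_forall fun ω => by simp only [Pi.zero_apply]; positivity), ← ENNReal.ofReal_pow (by positivity)]
    apply ENNReal.ofReal_le_ofReal
    rw [integral_const_mul, integral_add hi1 hi2, mul_pow]
    calc _ ≤ s^n * n.factorial * (Real.exp (1/2) + Real.exp (1/2)) := by gcongr
      _ = K * s ^ n := by rw [hK]; ring
      _ ≤ K^n * s^n := by gcongr; exact le_self_pow₀ hK1 hn0
  rw [eLpNorm_eq_lintegral_rpow_enorm_toReal (by simpa using hn0) (by simp)]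
  simp only [ENNReal.toReal_natCast, ENNReal.rpow_natCast]
  calc _ ≤ ((ENNReal.ofReal (K * s)) ^ n) ^ (1/(n:ℝ)) := by gcongr
    _ = _ := by
      rw [← ENNReal.rpow_natCast, ← ENNReal.rpow_mul, mul_one_div_cancel (by exact_mod_cast hn0), ENNReal.rpow_one]

lemma aux_sum {E : Type*} [MeasurableSpace E] (P : Measure E) [IsProbabilityMeasure P]
    (Y : E → ℝ) (hY : Measurable Y) (b : ℝ) (hb : ∀ e, |Y e| ≤ b) (N : ℕ) (hN : 1 ≤ N)
    (n : ℕ) (hn : 1 ≤ n) :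
    eLpNorm (fun ω : Fin N → E => ∑ i, (Y (ω i) - ∫ e, Y e ∂P)) n (Measure.pi fun _ => P)
      ≤ ENNReal.ofReal ((n.factorial * (2 * Real.exp (1/2))) * (b * Real.sqrt N)) := by
  have hne : Nonempty E := nonempty_of_isProbabilityMeasure P
  have hb0 : 0 ≤ b := (abs_nonneg _).trans (hb hne.some)
  rcases hb0.eq_or_lt with h0 | hbpos
  · have : Y = fun _ => 0 := by
      funext e; have := hb e; rw [← h0] at this; exact abs_nonpos_iff.mp this
    subst this
    simp
  have hN0 : (0:ℝ) < N := by exact_mod_cast hN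
  have hsub : HasSubgaussianMGF (fun e => Y e - ∫ e, Y e ∂P) ((‖b - (-b)‖₊ / 2) ^ 2) P :=
    hasSubgaussianMGF_of_mem_Icc hY.aemeasurable
      (Filter.Eventually.of_forall fun e => abs_le.mp (hb e))
  have hind : iIndepFun (fun (i : Fin N) (ω : Fin N → E) => Y (ω i) - ∫ e, Y e ∂P)
      (Measure.pi fun _ => P) :=
    iIndepFun_pi (X := fun _ e => Y e - ∫ e, Y e ∂P)
      (fun i => (hY.sub_const _).aemeasurable)
  have hs : HasSubgaussianMGF (fun ω : Fin N → E => ∑ i, (Y (ω i) - ∫ e, Y e ∂P))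
      (∑ i : Fin N, (‖b - (-b)‖₊ / 2) ^ 2) (Measure.pi fun _ => P) := by
    refine HasSubgaussianMGF.sum_of_iIndepFun hind (fun i _ => ?_)
    have hmp := measurePreserving_eval (fun _ : Fin N => P) i
    refine HasSubgaussianMGF.of_map (Y := Function.eval i) (X := fun e => Y e - ∫ e, Y e ∂P) hmp.measurable.aemeasurable ?_
    rw [hmp.map_eq]; exact hsub
  refine aux_moment _ _ _ (by positivity) _ ?_ hs n hn
  simp only [Finset.sum_const, Finset.card_univ, Fintype.card_fin, nsmul_eq_mul]
  push_cast
  rw [mul_pow, Real.sq_sqrt hN0.le, Real.norm_eq_abs, abs_of_pos (by linarith)]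
  ring

lemma aux_pi_meas {𝒳 𝒵 : Type*} [MeasurableSpace 𝒳] [MeasurableSpace 𝒵]
    (κ : Kernel 𝒳 𝒵) [IsMarkovKernel κ] (M : ℕ) :
    Measurable (fun x => Measure.pi fun _ : Fin M => κ x) := by
  refine Measurable.measure_of_isPiSystem_of_isProbabilityMeasure generateFrom_pi.symm isPiSystem_pi ?_
  rintro _ ⟨s, hs, rfl⟩
  simp only [Measure.pi_pi]
  exact Finset.measurable_prod _ fun i _ => κ.measurable_coe (hs i (Set.mem_univ i))

def auxK {𝒳 𝒵 : Type*} [MeasurableSpace 𝒳] [MeasurableSpace 𝒵]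
    (κ : Kernel 𝒳 𝒵) [IsMarkovKernel κ] (M : ℕ) : Kernel 𝒳 (Fin M → 𝒵) :=
  ⟨fun x => Measure.pi fun _ : Fin M => κ x, aux_pi_meas κ M⟩

instance {𝒳 𝒵 : Type*} [MeasurableSpace 𝒳] [MeasurableSpace 𝒵]
    (κ : Kernel 𝒳 𝒵) [IsMarkovKernel κ] (M : ℕ) : IsMarkovKernel (auxK κ M) :=
  ⟨fun x => by
    change IsProbabilityMeasure (Measure.pi fun _ : Fin M => κ x); infer_instance⟩

lemma aux_law {𝒳 𝒵 : Type*} [MeasurableSpace 𝒳] [MeasurableSpace 𝒵]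
    (π₀ : Measure 𝒳) [IsProbabilityMeasure π₀]
    (κ : Kernel 𝒳 𝒵) [IsMarkovKernel κ] (M : ℕ) :
    nestedLawOne π₀ κ M = π₀ ⊗ₘ auxK κ M := by
  rw [Measure.compProd_eq_comp_prod, nestedLawOne]
  congr 1
  funext x
  rw [Kernel.prod_apply, Kernel.id_apply]
  rfl

lemma aux_like_meas {𝒳 𝒵 : Type*} [MeasurableSpace 𝒳] [MeasurableSpace 𝒵]
    (g : 𝒳 × 𝒵 → ℝ) (hg : Measurable g) (M : ℕ) :
    Measurable (fun s : 𝒳 × (Fin M → 𝒵) => likeM g s) := by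
  unfold likeM
  refine Measurable.const_mul (Finset.measurable_sum _ fun j _ => hg.comp ?_) _
  exact measurable_fst.prodMk ((measurable_pi_apply j).comp measurable_snd)

lemma aux_like_le {𝒳 𝒵 : Type*} (g : 𝒳 × 𝒵 → ℝ) (Cg : ℝ) (hCg : ∀ w, g w ≤ Cg) {M : ℕ}
    (hM : 1 ≤ M) (s : 𝒳 × (Fin M → 𝒵)) : likeM g s ≤ Cg := by
  have hM0 : (0:ℝ) < M := by exact_mod_cast hM
  unfold likeM
  rw [inv_mul_le_iff₀ hM0]
  calc _ ≤ ∑ j : Fin M, Cg := Finset.sum_le_sum fun j _ => hCg _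
    _ = _ := by simp

lemma aux_like_pos {𝒳 𝒵 : Type*} (g : 𝒳 × 𝒵 → ℝ) (hg : ∀ w, 0 < g w) {M : ℕ}
    (hM : 1 ≤ M) (s : 𝒳 × (Fin M → 𝒵)) : 0 < likeM g s := by
  have hM0 : (0:ℝ) < M := by exact_mod_cast hM
  have : Nonempty (Fin M) := ⟨⟨0, hM⟩⟩
  unfold likeM
  exact mul_pos (by positivity) (Finset.sum_pos (fun j _ => hg _) Finset.univ_nonempty)

lemma aux_mean {𝒳 𝒵 : Type*} [MeasurableSpace 𝒳] [MeasurableSpace 𝒵]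
    (π₀ : Measure 𝒳) [IsProbabilityMeasure π₀]
    (κ : Kernel 𝒳 𝒵) [IsMarkovKernel κ]
    (g : 𝒳 × 𝒵 → ℝ) (hg_meas : Measurable g)
    (hg_pos : ∀ w, 0 < g w) (Cg : ℝ) (hCg : ∀ w, g w ≤ Cg) (M : ℕ) (hM : 1 ≤ M)
    (f : 𝒳 → ℝ) (hf : Measurable f) (Cf : ℝ) (hCf : ∀ x, |f x| ≤ Cf) :
    ∫ s, likeM g s * f s.1 ∂(nestedLawOne π₀ κ M) =
      ∫ x, f x * (∫ z, g (x, z) ∂(κ x)) ∂π₀ := by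
  have hM0 : (M:ℝ) ≠ 0 := by positivity
  rw [aux_law, Measure.integral_compProd]
  · refine integral_congr_ae (Filter.Eventually.of_forall fun x => ?_)
    change ∫ b, likeM g (x, b) * f x ∂(Measure.pi fun _ : Fin M => κ x) = _
    rw [integral_mul_const, mul_comm]
    congr 1
    simp only [likeM]
    rw [integral_const_mul, integral_finsetSum]
    · have : ∀ j : Fin M, ∫ b : Fin M → 𝒵, g (x, b j) ∂(Measure.pi fun _ : Fin M => κ x)
          = ∫ z, g (x, z) ∂(κ x) := by
        intro j
        have hmp := measurePreserving_eval (fun _ : Fin M => κ x) j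
        conv_rhs => rw [← hmp.map_eq]
        rw [integral_map hmp.measurable.aemeasurable]
        exact (hg_meas.comp measurable_prodMk_left).aestronglyMeasurable
      simp only [this, Finset.sum_const, Finset.card_univ, Fintype.card_fin, nsmul_eq_mul]
      field_simp
    · intro j _
      refine Integrable.of_bound (C := Cg) ?_ (Filter.Eventually.of_forall fun b => ?_)
      · exact (hg_meas.comp (measurable_const.prodMk (measurable_pi_apply j))).aestronglyMeasurable
      · rw [Real.norm_eq_abs, abs_of_pos (hg_pos _)]; exact hCg _
  · refine Integrable.of_bound (C := Cg * Cf) ?_ (Filter.Eventually.of_forall fun s => ?_)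
    · exact ((aux_like_meas g hg_meas M).mul (hf.comp measurable_fst)).aestronglyMeasurable
    · rw [Real.norm_eq_abs, abs_mul, abs_of_pos (aux_like_pos g hg_pos hM s)]
      have h1 := aux_like_pos g hg_pos hM s
      have h2 := aux_like_le g Cg hCg hM s
      exact mul_le_mul h2 (hCf _) (abs_nonneg _) (by linarith)

/-- If the likelihood `g_y` is strictly positive and bounded, then for
every `p ≥ 1` there is a finite constant `C`, independent of `N`, `M` and `f`, such that
for every bounded measurable `f`, `E[|π(f) − π^{N,M}(f)|^p]^{1/p} ≤ C‖f‖_∞/√N`. -/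
theorem stmt0 {𝒳 𝒵 : Type*} [MeasurableSpace 𝒳] [MeasurableSpace 𝒵]
    (π₀ : Measure 𝒳) [IsProbabilityMeasure π₀]
    (κ : Kernel 𝒳 𝒵) [IsMarkovKernel κ]
    (g : 𝒳 × 𝒵 → ℝ) (hg_meas : Measurable g)
    (hg_pos : ∀ w, 0 < g w) (Cg : ℝ) (hCg : ∀ w, g w ≤ Cg)
    (hl_pos : 0 < ∫ x, (∫ z, g (x, z) ∂(κ x)) ∂π₀)
    (p : ℝ) (hp : 1 ≤ p) :
    ∃ C : ℝ, 0 ≤ C ∧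
      ∀ (N M : ℕ), 1 ≤ N → 1 ≤ M →
        ∀ (f : 𝒳 → ℝ), Measurable f → ∀ (Cf : ℝ), (∀ x, |f x| ≤ Cf) →
          eLpNorm
            (fun ω : Fin N → 𝒳 × (Fin M → 𝒵) =>
              (∫ x, f x * (∫ z, g (x, z) ∂(κ x)) ∂π₀) /
                  (∫ x, (∫ z, g (x, z) ∂(κ x)) ∂π₀)
                - nisEstimator g f ω)
            (ENNReal.ofReal p) (nestedLaw π₀ κ N M)
          ≤ ENNReal.ofReal (C * Cf / Real.sqrt N) := by
  have hne : Nonempty 𝒳 := nonempty_of_isProbabilityMeasure π₀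
  have hne' : Nonempty 𝒵 := nonempty_of_isProbabilityMeasure (κ hne.some)
  have hCg0 : 0 < Cg := (hg_pos (hne.some, hne'.some)).trans_le (hCg _)
  set c := ∫ x, (∫ z, g (x, z) ∂(κ x)) ∂π₀ with hc
  obtain ⟨n, hn⟩ := exists_nat_ge p
  have hn1 : 1 ≤ n := by exact_mod_cast hp.trans hn
  set K : ℝ := n.factorial * (2 * Real.exp (1/2)) with hK
  have hK0 : 0 < K := by positivity
  refine ⟨2 * K * Cg / c, by positivity, ?_⟩
  intro N M hN hM f hf Cf hCf
  have hCf0 : 0 ≤ Cf := (abs_nonneg _).trans (hCf hne.some)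
  set a := ∫ x, f x * (∫ z, g (x, z) ∂(κ x)) ∂π₀ with ha
  have hN0 : (0:ℝ) < N := by exact_mod_cast hN
  have hNne : Nonempty (Fin N) := ⟨⟨0, hN⟩⟩
  have hP : IsProbabilityMeasure (nestedLawOne π₀ κ M) := by
    rw [aux_law]; infer_instance
  have hPN : IsProbabilityMeasure (nestedLaw π₀ κ N M) := by
    unfold nestedLaw; infer_instance
  have hlm := aux_like_meas g hg_meas M
  have hlp := fun s => aux_like_pos g hg_pos hM s
  have hll := fun s => aux_like_le g Cg hCg hM s
  have hVm : Measurable (fun s : 𝒳 × (Fin M → 𝒵) => likeM g s * f s.1) :=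
    hlm.mul (hf.comp measurable_fst)
  have hE1 := aux_mean π₀ κ g hg_meas hg_pos Cg hCg M hM f hf Cf hCf
  have hE2 := aux_mean π₀ κ g hg_meas hg_pos Cg hCg M hM (fun _ => 1) measurable_const 1
    (fun _ => by simp)
  simp only [mul_one, one_mul] at hE2
  rw [← ha] at hE1
  rw [← hc] at hE2
  have hA := aux_sum (nestedLawOne π₀ κ M) _ hVm (Cg * Cf) (fun s => by
    rw [abs_mul, abs_of_pos (hlp s)]
    exact mul_le_mul (hll s) (hCf _) (abs_nonneg _) hCg0.le) N hN n hn1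
  have hB := aux_sum (nestedLawOne π₀ κ M) _ hlm Cg (fun s => by
    rw [abs_of_pos (hlp s)]; exact hll s) N hN n hn1
  rw [hE1, ← hK] at hA
  rw [hE2, ← hK] at hB
  change eLpNorm _ _ (nestedLaw π₀ κ N M) ≤ _ at hA
  change eLpNorm _ _ (nestedLaw π₀ κ N M) ≤ _ at hB
  set FA : (Fin N → 𝒳 × (Fin M → 𝒵)) → ℝ := fun ω => ∑ i, (likeM g (ω i) * f (ω i).1 - a) with hFA
  set FB : (Fin N → 𝒳 × (Fin M → 𝒵)) → ℝ := fun ω => ∑ i, (likeM g (ω i) - c) with hFB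
  have hFAm : Measurable FA := Finset.measurable_sum _ fun i _ =>
    (hVm.comp (measurable_pi_apply i)).sub_const _
  have hFBm : Measurable FB := Finset.measurable_sum _ fun i _ =>
    (hlm.comp (measurable_pi_apply i)).sub_const _
  have hest : Measurable (fun ω : Fin N → 𝒳 × (Fin M → 𝒵) => a / c - nisEstimator g f ω) := by
    unfold nisEstimator
    refine measurable_const.sub (Measurable.div ?_ ?_)
    · exact Finset.measurable_sum _ fun i _ => hVm.comp (measurable_pi_apply i)
    · exact Finset.measurable_sum _ fun i _ => hlm.comp (measurable_pi_apply i)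
  have hpt : ∀ ω, ‖a / c - nisEstimator g f ω‖ ≤
      ‖((1 / (N * c)) • (fun ω => |FA ω|) + (Cf / (N * c)) • (fun ω => |FB ω|)) ω‖ := by
    intro ω
    simp only [Pi.add_apply, Pi.smul_apply, smul_eq_mul]
    rw [Real.norm_eq_abs, Real.norm_eq_abs, abs_of_nonneg (a := _ + _) (by positivity)]
    set SA := ∑ i, likeM g (ω i) * f (ω i).1 with hSA
    set SB := ∑ i, likeM g (ω i) with hSB
    have hSBp : 0 < SB := Finset.sum_pos (fun i _ => hlp _) Finset.univ_nonempty
    have hAe : FA ω = SA - N * a := by simp [hFA, hSA, Finset.sum_sub_distrib]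
    have hBe : FB ω = SB - N * c := by simp [hFB, hSB, Finset.sum_sub_distrib]
    have hq : |SA / SB| ≤ Cf := by
      rw [abs_div, abs_of_pos hSBp, div_le_iff₀ hSBp, hSA, hSB, Finset.mul_sum]
      refine (Finset.abs_sum_le_sum_abs _ _).trans (Finset.sum_le_sum fun i _ => ?_)
      rw [abs_mul, abs_of_pos (hlp _), mul_comm]
      exact mul_le_mul_of_nonneg_right (hCf _) (hlp _).le
    have hid : a / c - nisEstimator g f ω =
        -(1 / (N * c)) * FA ω + (SA / SB) * (1 / (N * c)) * FB ω := by
      rw [hAe, hBe]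
      change a / c - SA / SB = _
      field_simp
      ring
    rw [hid]
    refine (abs_add_le _ _).trans ?_
    rw [abs_mul, abs_mul, abs_mul, abs_neg, abs_of_pos (a := 1 / (N * c)) (by positivity)]
    gcongr
    calc |SA / SB| * (1 / (N * c)) ≤ Cf * (1 / (N * c)) := by gcongr
      _ = _ := by ring
  calc _ ≤ eLpNorm (fun ω => a / c - nisEstimator g f ω) n (nestedLaw π₀ κ N M) := by
        refine eLpNorm_le_eLpNorm_of_exponent_le ?_ hest.aestronglyMeasurable
        rw [← ENNReal.ofReal_natCast]
        exact ENNReal.ofReal_le_ofReal hn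
    _ ≤ eLpNorm ((1 / (N * c)) • (fun ω => |FA ω|) + (Cf / (N * c)) • (fun ω => |FB ω|)) n
          (nestedLaw π₀ κ N M) := eLpNorm_mono hpt
    _ ≤ eLpNorm ((1 / (N * c)) • (fun ω => |FA ω|)) n (nestedLaw π₀ κ N M)
        + eLpNorm ((Cf / (N * c)) • (fun ω => |FB ω|)) n (nestedLaw π₀ κ N M) := by
        refine eLpNorm_add_le ?_ ?_ (by exact_mod_cast hn1)
        · exact (hFAm.norm.const_smul _).aestronglyMeasurable
        · exact (hFBm.norm.const_smul _).aestronglyMeasurable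
    _ = ENNReal.ofReal (1 / (N * c)) * eLpNorm FA n (nestedLaw π₀ κ N M)
        + ENNReal.ofReal (Cf / (N * c)) * eLpNorm FB n (nestedLaw π₀ κ N M) := by
        have h1 : eLpNorm (fun ω => |FA ω|) n (nestedLaw π₀ κ N M)
          = eLpNorm FA n (nestedLaw π₀ κ N M) := eLpNorm_norm FA
        have h2 : eLpNorm (fun ω => |FB ω|) n (nestedLaw π₀ κ N M)
          = eLpNorm FB n (nestedLaw π₀ κ N M) := eLpNorm_norm FB
        rw [eLpNorm_const_smul, eLpNorm_const_smul, h1, h2,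
          Real.enorm_of_nonneg (by positivity), Real.enorm_of_nonneg (by positivity)]
    _ ≤ ENNReal.ofReal (1 / (N * c)) * ENNReal.ofReal (K * (Cg * Cf * Real.sqrt N))
        + ENNReal.ofReal (Cf / (N * c)) * ENNReal.ofReal (K * (Cg * Real.sqrt N)) := by
        gcongr
    _ = _ := by
        rw [← ENNReal.ofReal_mul (by positivity), ← ENNReal.ofReal_mul (by positivity),
          ← ENNReal.ofReal_add (by positivity) (by positivity)]
        congr 1
        have hs : 0 < Real.sqrt N := Real.sqrt_pos.mpr hN0
        have hss : (N:ℝ) = Real.sqrt N * Real.sqrt N := (Real.mul_self_sqrt hN0.le).symm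
        set r := Real.sqrt N
        rw [hss]
        field_simp
        ring

end
end

section
/- Under the stated model, if ‖g_y‖_∞ < ∞, then for every p ≥ 1 there exists a constant B_p depending only on p such that for every bounded measurable f : 𝒳 → ℝ, E[|π₀(f·l_y) − π₀^N(f·l_y)|^p] + E[|π₀^N(f·(l_y − l_y^M))|^p] ≤ B_p·‖f‖_∞^p·N^{−p/2}·‖g_y‖_∞^p. -/
open MeasureTheory ProbabilityTheory
open scoped ENNReal

noncomputable section

universe u v

lemma aux_pow_le {p : ℝ} (hp : 1 ≤ p) (x : ℝ) :
    |x| ^ p ≤ p ^ p * (Real.exp x + Real.exp (-x)) := by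
  have hp0 : 0 < p := by linarith
  have h1 : |x| / p ≤ Real.exp (|x| / p) := by
    have := Real.add_one_le_exp (|x| / p); linarith
  have h2 : (|x| / p) ^ p ≤ Real.exp |x| := by
    calc (|x| / p) ^ p ≤ (Real.exp (|x| / p)) ^ p :=
          Real.rpow_le_rpow (by positivity) h1 hp0.le
      _ = Real.exp |x| := by
          rw [← Real.exp_mul]; congr 1; field_simp
  have h3 : Real.exp |x| ≤ Real.exp x + Real.exp (-x) := by
    rcases abs_cases x with ⟨h, _⟩ | ⟨h, _⟩ <;> rw [h]
    · linarith [Real.exp_pos (-x)]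
    · linarith [Real.exp_pos x]
  rw [Real.div_rpow (abs_nonneg x) hp0.le, div_le_iff₀ (by positivity)] at h2
  have : 0 < p ^ p := by positivity
  nlinarith

lemma aux_mgf {Ω : Type*} [MeasurableSpace Ω] (μ : Measure Ω) [IsProbabilityMeasure μ]
    (Y : Ω → ℝ) (hY : Measurable Y) (c : ℝ) (hc : 0 ≤ c) (hb : ∀ w, |Y w| ≤ c)
    (h0 : ∫ w, Y w ∂μ = 0) (N : ℕ) (t : ℝ) :
    Integrable (fun ω : Fin N → Ω => Real.exp (t * ∑ i, Y (ω i))) (Measure.pi fun _ => μ) ∧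
    ∫ ω : Fin N → Ω, Real.exp (t * ∑ i, Y (ω i)) ∂(Measure.pi fun _ => μ)
      ≤ Real.exp (N * (c ^ 2 * t ^ 2 / 2)) := by
  have hs := hasSubgaussianMGF_of_mem_Icc_of_integral_eq_zero (μ := μ) (a := -c) (b := c)
    hY.aemeasurable (Filter.Eventually.of_forall fun w => abs_le.1 (hb w)) h0
  have he : ∀ ω : Fin N → Ω, Real.exp (t * ∑ i, Y (ω i)) = ∏ i, Real.exp (t * Y (ω i)) := by
    intro ω; rw [Finset.mul_sum, Real.exp_sum]
  simp_rw [he]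
  constructor
  · exact Integrable.fintype_prod (f := fun _ w => Real.exp (t * Y w))
      (fun _ => hs.integrable_exp_mul t)
  · rw [integral_fintype_prod_eq_prod (fun (_ : Fin N) w => Real.exp (t * Y w))]
    have h1 : ∫ w, Real.exp (t * Y w) ∂μ ≤ Real.exp (c ^ 2 * t ^ 2 / 2) := by
      have := hs.mgf_le t
      have hcc : (((‖c - -c‖₊ / 2) ^ 2 : NNReal) : ℝ) = c ^ 2 := by
        push_cast
        rw [Real.norm_of_nonneg (by linarith)]; ring
      rw [hcc] at this
      exact this
    rw [Finset.prod_const, Finset.card_univ, Fintype.card_fin, Real.exp_nat_mul]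
    exact pow_le_pow_left₀ (integral_nonneg fun _ => (Real.exp_pos _).le) h1 N

lemma aux_moment_s9 {p : ℝ} (hp : 1 ≤ p) {Ω : Type*} [MeasurableSpace Ω] (μ : Measure Ω)
    [IsProbabilityMeasure μ]
    (Y : Ω → ℝ) (hY : Measurable Y) (c : ℝ) (hc : 0 ≤ c) (hb : ∀ w, |Y w| ≤ c)
    (h0 : ∫ w, Y w ∂μ = 0) (N : ℕ) (hN : 1 ≤ N) :
    ∫⁻ ω : Fin N → Ω, ENNReal.ofReal (|(N : ℝ)⁻¹ * ∑ i, Y (ω i)| ^ p) ∂(Measure.pi fun _ => μ)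
      ≤ ENNReal.ofReal (p ^ p * (2 * Real.exp (1 / 2)) * (c ^ p * ((Real.sqrt N)⁻¹) ^ p)) := by
  have hp0 : 0 < p := by linarith
  rcases hc.eq_or_lt with rfl | hc
  · have hz : ∀ w, Y w = 0 := fun w => abs_nonpos_iff.1 (hb w)
    simp [hz, Real.zero_rpow hp0.ne']
  have hN0 : (0 : ℝ) < N := by exact_mod_cast hN
  have hsN : 0 < Real.sqrt N := Real.sqrt_pos.2 hN0
  have hsq : Real.sqrt N * Real.sqrt N = N := Real.mul_self_sqrt hN0.le
  set t : ℝ := (c * Real.sqrt N)⁻¹ with ht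
  obtain ⟨i1, b1⟩ := aux_mgf μ Y hY c hc.le hb h0 N t
  obtain ⟨i2, b2⟩ := aux_mgf μ Y hY c hc.le hb h0 N (-t)
  have hval : (N : ℝ) * (c ^ 2 * t ^ 2 / 2) = 1 / 2 := by
    rw [ht]; field_simp; rw [sq, hsq]
  rw [neg_sq] at b2
  rw [hval] at b1 b2
  set K : ℝ := p ^ p * (c ^ p * ((Real.sqrt N)⁻¹) ^ p) with hK
  have hK0 : 0 ≤ K := by positivity
  have hpt : ∀ ω : Fin N → Ω, |(N : ℝ)⁻¹ * ∑ i, Y (ω i)| ^ p ≤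
      K * (Real.exp (t * ∑ i, Y (ω i)) + Real.exp (-t * ∑ i, Y (ω i))) := by
    intro ω
    have e : (N : ℝ)⁻¹ * ∑ i, Y (ω i) = (c * (Real.sqrt N)⁻¹) * (t * ∑ i, Y (ω i)) := by
      rw [ht]; field_simp; rw [sq, hsq, mul_comm]
    have := aux_pow_le hp (t * ∑ i, Y (ω i))
    rw [e, abs_mul, abs_of_pos (by positivity : 0 < c * (Real.sqrt N)⁻¹),
      Real.mul_rpow (by positivity) (abs_nonneg _), Real.mul_rpow hc.le (by positivity), hK,
      neg_mul]
    calc _ ≤ c ^ p * (Real.sqrt N)⁻¹ ^ p * _ := mul_le_mul_of_nonneg_left this (by positivity)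
      _ = _ := by ring
  calc _ ≤ ∫⁻ ω : Fin N → Ω, ENNReal.ofReal
        (K * (Real.exp (t * ∑ i, Y (ω i)) + Real.exp (-t * ∑ i, Y (ω i))))
          ∂(Measure.pi fun _ => μ) :=
        lintegral_mono fun ω => ENNReal.ofReal_le_ofReal (hpt ω)
    _ = ENNReal.ofReal (∫ ω : Fin N → Ω,
        (K * (Real.exp (t * ∑ i, Y (ω i)) + Real.exp (-t * ∑ i, Y (ω i))))
          ∂(Measure.pi fun _ => μ)) := by
        refine (ofReal_integral_eq_lintegral_ofReal ((i1.add i2).const_mul K) ?_).symm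
        exact Filter.Eventually.of_forall fun ω =>
          mul_nonneg hK0 (add_nonneg (Real.exp_pos _).le (Real.exp_pos _).le)
    _ ≤ _ := by
        apply ENNReal.ofReal_le_ofReal
        rw [integral_const_mul, integral_add i1 i2]
        calc _ ≤ K * (2 * Real.exp (1 / 2)) := mul_le_mul_of_nonneg_left (by linarith) hK0
          _ = _ := by rw [hK]; ring

/-- The inner kernel. -/
def innerK {𝒳 : Type*} {𝒵 : Type*} [MeasurableSpace 𝒳] [MeasurableSpace 𝒵]
    (κ : Kernel 𝒳 𝒵) [IsMarkovKernel κ] (M : ℕ) : Kernel 𝒳 (𝒳 × (Fin M → 𝒵)) where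
  toFun x := (Measure.dirac x).prod (Measure.pi fun _ : Fin M => κ x)
  measurable' := by
    have h1 : Measurable fun x => Measure.pi fun _ : Fin M => κ x := by
      refine Measurable.measure_of_isPiSystem_of_isProbabilityMeasure
        generateFrom_pi.symm isPiSystem_pi ?_
      rintro _ ⟨s, hs, rfl⟩
      simp_rw [Measure.pi_pi]
      exact Finset.measurable_prod _ fun i _ => κ.measurable_coe (hs i (Set.mem_univ i))
    let κ' : Kernel 𝒳 (Fin M → 𝒵) := ⟨_, h1⟩
    have : IsMarkovKernel κ' := ⟨fun x => by
      change IsProbabilityMeasure (Measure.pi fun _ : Fin M => κ x); infer_instance⟩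
    have h2 : (fun x => (Measure.dirac x).prod (Measure.pi fun _ : Fin M => κ x))
        = fun x => (Kernel.id ×ₖ κ') x := by
      funext x
      rw [Kernel.prod_apply, Kernel.id_apply]
      rfl
    rw [h2]
    exact Kernel.measurable _

instance {𝒳 : Type*} {𝒵 : Type*} [MeasurableSpace 𝒳] [MeasurableSpace 𝒵]
    (κ : Kernel 𝒳 𝒵) [IsMarkovKernel κ] (M : ℕ) : IsMarkovKernel (innerK κ M) :=
  ⟨fun x => by
    change IsProbabilityMeasure ((Measure.dirac x).prod (Measure.pi fun _ : Fin M => κ x))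
    infer_instance⟩

lemma nestedLawOne_eq {𝒳 : Type*} {𝒵 : Type*} [MeasurableSpace 𝒳] [MeasurableSpace 𝒵]
    (π₀ : Measure 𝒳) (κ : Kernel 𝒳 𝒵) [IsMarkovKernel κ] (M : ℕ) :
    nestedLawOne π₀ κ M = π₀.bind (innerK κ M) := rfl

lemma integral_nestedLawOne {𝒳 : Type*} {𝒵 : Type*} [MeasurableSpace 𝒳] [MeasurableSpace 𝒵]
    (π₀ : Measure 𝒳) [IsProbabilityMeasure π₀] (κ : Kernel 𝒳 𝒵) [IsMarkovKernel κ] (M : ℕ)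
    (Y : 𝒳 × (Fin M → 𝒵) → ℝ) (hY : Measurable Y) (c : ℝ) (hb : ∀ w, |Y w| ≤ c) :
    ∫ w, Y w ∂(nestedLawOne π₀ κ M)
      = ∫ x, ∫ z, Y (x, z) ∂(Measure.pi fun _ : Fin M => κ x) ∂π₀ := by
  rw [nestedLawOne_eq, Measure.comp_eq_comp_const_apply, Kernel.integral_comp]
  · rw [Kernel.const_apply]
    congr 1
    funext x
    change ∫ w, Y w ∂((Measure.dirac x).prod (Measure.pi fun _ : Fin M => κ x)) = _
    rw [Measure.dirac_prod, integral_map (by fun_prop) hY.aestronglyMeasurable]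
  · exact Integrable.of_bound hY.aestronglyMeasurable c (Filter.Eventually.of_forall hb)

/-- If `‖g_y‖_∞ < ∞`, then for every `p ≥ 1` there is a constant `B_p`
depending only on `p` (independent of the model, of `N`, `M` and `f`) such that
`E[|π₀(f l_y) − π₀^N(f l_y)|^p] + E[|π₀^N(f (l_y − l_y^M))|^p]
  ≤ B_p ‖f‖_∞^p N^{−p/2} ‖g_y‖_∞^p`
(here `Cg` is any uniform bound on the nonnegative likelihood `g_y`). -/
theorem stmt9 (p : ℝ) (hp : 1 ≤ p) :
    ∃ B : ℝ, 0 < B ∧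
      ∀ (𝒳 : Type u) (𝒵 : Type v) [MeasurableSpace 𝒳] [MeasurableSpace 𝒵]
        (π₀ : Measure 𝒳) [IsProbabilityMeasure π₀]
        (κ : Kernel 𝒳 𝒵) [IsMarkovKernel κ]
        (g : 𝒳 × 𝒵 → ℝ), Measurable g → (∀ w, 0 ≤ g w) →
          ∀ (Cg : ℝ), (∀ w, g w ≤ Cg) →
          ∀ (N M : ℕ), 1 ≤ N → 1 ≤ M →
            ∀ (f : 𝒳 → ℝ), Measurable f → ∀ (Cf : ℝ), (∀ x, |f x| ≤ Cf) →
              (∫⁻ ω, ENNReal.ofReal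
                  (|(∫ x, f x * (∫ z, g (x, z) ∂(κ x)) ∂π₀)
                      - (N : ℝ)⁻¹ * ∑ i, f (ω i).1 * (∫ z, g ((ω i).1, z) ∂(κ (ω i).1))| ^ p)
                ∂(nestedLaw π₀ κ N M))
              + (∫⁻ ω, ENNReal.ofReal
                  (|(N : ℝ)⁻¹ * ∑ i, f (ω i).1 *
                      ((∫ z, g ((ω i).1, z) ∂(κ (ω i).1)) - likeM g (ω i))| ^ p)
                ∂(nestedLaw π₀ κ N M))
              ≤ ENNReal.ofReal (B * Cf ^ p * ((Real.sqrt N)⁻¹) ^ p * Cg ^ p) := by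
  refine ⟨2 * (p ^ p * (2 * Real.exp (1 / 2)) * 2 ^ p), by positivity, ?_⟩
  intro 𝒳 𝒵 _ _ π₀ _ κ _ g hg hg0 Cg hgC N M hN hM f hf Cf hfC
  have hX : Nonempty 𝒳 := nonempty_of_isProbabilityMeasure π₀
  obtain ⟨x0⟩ := hX
  have hZ : Nonempty 𝒵 := nonempty_of_isProbabilityMeasure (κ x0)
  obtain ⟨z0⟩ := hZ
  have hCf : 0 ≤ Cf := (abs_nonneg _).trans (hfC x0)
  have hCg : 0 ≤ Cg := (hg0 _).trans (hgC (x0, z0))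
  have hN0 : (0 : ℝ) < N := by exact_mod_cast hN
  have hM0 : (0 : ℝ) < M := by exact_mod_cast hM
  have hprob : IsProbabilityMeasure (nestedLawOne π₀ κ M) := by
    rw [nestedLawOne_eq]; infer_instance
  set l : 𝒳 → ℝ := fun x => ∫ z, g (x, z) ∂(κ x) with hl
  have hlm : Measurable l := (hg.stronglyMeasurable.integral_kernel_prod_right' (κ := κ)).measurable
  have hgi : ∀ x, Integrable (fun z => g (x, z)) (κ x) := fun x =>
    Integrable.of_bound (Measurable.aestronglyMeasurable (by fun_prop)) Cg (Filter.Eventually.of_forall fun z => by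
      rw [Real.norm_of_nonneg (hg0 _)]; exact hgC _)
  have hl0 : ∀ x, 0 ≤ l x := fun x => integral_nonneg fun z => hg0 _
  have hlC : ∀ x, l x ≤ Cg := fun x => by
    calc l x ≤ ∫ z, Cg ∂(κ x) := integral_mono (hgi x) (integrable_const _) fun z => hgC _
      _ = Cg := by simp
  have hfl : ∀ x, |f x * l x| ≤ Cf * Cg := fun x => by
    rw [abs_mul, abs_of_nonneg (hl0 x)]
    exact mul_le_mul (hfC x) (hlC x) (hl0 x) hCf
  have hfli : Integrable (fun x => f x * l x) π₀ :=
    Integrable.of_bound (by fun_prop) (Cf * Cg) (Filter.Eventually.of_forall hfl)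
  set m : ℝ := ∫ x, f x * l x ∂π₀ with hm
  have hmb : |m| ≤ Cf * Cg := by
    have := norm_integral_le_of_norm_le_const (μ := π₀) (f := fun x => f x * l x)
      (C := Cf * Cg) (Filter.Eventually.of_forall hfl)
    simpa using this
  have hCC : 0 ≤ Cf * Cg := mul_nonneg hCf hCg
  have hLm : Measurable (fun s : 𝒳 × (Fin M → 𝒵) => likeM g s) := by
    unfold likeM
    fun_prop
  have hL0 : ∀ s : 𝒳 × (Fin M → 𝒵), 0 ≤ likeM g s := fun s =>
    mul_nonneg (by positivity) (Finset.sum_nonneg fun j _ => hg0 _)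
  have hLC : ∀ s : 𝒳 × (Fin M → 𝒵), likeM g s ≤ Cg := fun s => by
    unfold likeM
    rw [inv_mul_le_iff₀ hM0]
    calc _ ≤ ∑ j : Fin M, Cg := Finset.sum_le_sum fun j _ => hgC _
      _ = _ := by simp
  have b1 : ∀ s : 𝒳 × (Fin M → 𝒵), |m - f s.1 * l s.1| ≤ 2 * (Cf * Cg) := fun s => by
    have h1 := abs_le.1 (hfl s.1)
    have h2 := abs_le.1 hmb
    exact abs_le.2 ⟨by linarith, by linarith⟩
  have b2 : ∀ s : 𝒳 × (Fin M → 𝒵), |f s.1 * (l s.1 - likeM g s)| ≤ 2 * (Cf * Cg) := fun s => by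
    have h1 : |l s.1 - likeM g s| ≤ Cg := abs_le.2
      ⟨by linarith [hl0 s.1, hLC s], by linarith [hlC s.1, hL0 s]⟩
    rw [abs_mul]
    have := mul_le_mul (hfC s.1) h1 (abs_nonneg _) hCf
    linarith
  have m1 : Measurable (fun s : 𝒳 × (Fin M → 𝒵) => m - f s.1 * l s.1) := by fun_prop
  have m2 : Measurable (fun s : 𝒳 × (Fin M → 𝒵) => f s.1 * (l s.1 - likeM g s)) := by fun_prop
  have z1 : ∫ s, (m - f s.1 * l s.1) ∂(nestedLawOne π₀ κ M) = 0 := by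
    rw [integral_nestedLawOne π₀ κ M _ m1 _ b1]
    simp only [integral_const, probReal_univ, one_smul]
    rw [integral_sub (integrable_const _) hfli]
    simp [hm]
  have z2 : ∫ s, (f s.1 * (l s.1 - likeM g s)) ∂(nestedLawOne π₀ κ M) = 0 := by
    rw [integral_nestedLawOne π₀ κ M _ m2 _ b2]
    have : ∀ x, ∫ z : Fin M → 𝒵, f x * (l x - likeM g (x, z)) ∂(Measure.pi fun _ => κ x) = 0 := by
      intro x
      have hi : ∀ j : Fin M, Integrable (fun z : Fin M → 𝒵 => g (x, z j))
          (Measure.pi fun _ => κ x) := fun j =>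
        Integrable.of_bound (Measurable.aestronglyMeasurable (by fun_prop)) Cg (Filter.Eventually.of_forall fun z => by
          rw [Real.norm_of_nonneg (hg0 _)]; exact hgC _)
      have hj : ∀ j : Fin M, ∫ z : Fin M → 𝒵, g (x, z j) ∂(Measure.pi fun _ => κ x) = l x :=
        fun j => integral_comp_eval (μ := fun _ : Fin M => κ x) (i := j)
          (f := fun z => g (x, z)) (hgi x).aestronglyMeasurable
      unfold likeM
      rw [integral_const_mul, integral_sub (integrable_const _)
        ((integrable_finsetSum _ fun j _ => hi j).const_mul _), integral_const_mul,
        integral_finsetSum _ fun j _ => hi j]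
      simp only [hj]
      simp
      right
      field_simp
      simp
    simp [this]
  have r1 := aux_moment_s9 hp (nestedLawOne π₀ κ M) _ m1 _ (by positivity) b1 z1 N hN
  have r2 := aux_moment_s9 hp (nestedLawOne π₀ κ M) _ m2 _ (by positivity) b2 z2 N hN
  have e1 : ∀ ω : Fin N → 𝒳 × (Fin M → 𝒵), (N : ℝ)⁻¹ * ∑ i, (m - f (ω i).1 * l (ω i).1)
      = m - (N : ℝ)⁻¹ * ∑ i, f (ω i).1 * l (ω i).1 := by
    intro ω
    rw [Finset.sum_sub_distrib]
    simp
    field_simp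
  simp only [e1] at r1
  refine (add_le_add r1 r2).trans ?_
  rw [← ENNReal.ofReal_add (by positivity) (by positivity)]
  apply ENNReal.ofReal_le_ofReal
  apply le_of_eq
  rw [Real.mul_rpow (by norm_num) hCC, Real.mul_rpow hCf hCg]
  ring

end
end

section
/- In the linear Gaussian model, for every r > 0 and every y ∈ ℝ^{d_y} with ‖y − μ_y^{d_z}‖ ≤ r, the normalizing constant π₀(l_y^{d_z}) satisfies 1/π₀(l_y^{d_z}) ≤ ( [ (σ₁(A) + σ₁(B^{d_z})·σ₁(H^{d_z}))²·λ₁(Σ_x) + σ₁(B^{d_z})²·λ₁(Q^{d_z}) + λ₁(R) ]^{d_y} / |R| )^{1/2} · exp( (1/2)·d_y³·r²·λ_min(R)⁻¹ ). -/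
open Matrix

noncomputable section

/-- The largest (real) eigenvalue of a real matrix: the supremum of its real spectrum. -/
def maxEig {n : ℕ} (A : Matrix (Fin n) (Fin n) ℝ) : ℝ :=
  sSup (spectrum ℝ A)

/-- The smallest (real) eigenvalue of a real matrix: the infimum of its real spectrum. -/
def minEig {n : ℕ} (A : Matrix (Fin n) (Fin n) ℝ) : ℝ :=
  sInf (spectrum ℝ A)

/-- The largest singular value of a real matrix, i.e. its ℓ²→ℓ² operator norm. -/
def sigma1 {m n : ℕ} (A : Matrix (Fin m) (Fin n) ℝ) : ℝ :=
  ‖LinearMap.toContinuousLinearMap (Matrix.toEuclideanLin A)‖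

open scoped Matrix.Norms.L2Operator in
theorem aux_sigma {m n : ℕ} (A : Matrix (Fin m) (Fin n) ℝ) : sigma1 A = ‖A‖ := rfl

open scoped Matrix.Norms.L2Operator in
theorem aux_sigma_T {m n k : ℕ} (A : Matrix (Fin m) (Fin n) ℝ) (B : Matrix (Fin m) (Fin k) ℝ)
    (H : Matrix (Fin k) (Fin n) ℝ) :
    sigma1 (A + B * H) ≤ sigma1 A + sigma1 B * sigma1 H := by
  simp only [aux_sigma]
  exact (norm_add_le _ _).trans (add_le_add le_rfl (Matrix.l2_opNorm_mul B H))

theorem aux_norm {n : ℕ} (x : Fin n → ℝ) : ‖WithLp.toLp 2 x‖ ^ 2 = x ⬝ᵥ x := by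
  rw [EuclideanSpace.norm_sq_eq]
  simp [dotProduct, sq]

open scoped Matrix.Norms.L2Operator in
theorem aux_mulVec {m n : ℕ} (A : Matrix (Fin m) (Fin n) ℝ) (x : Fin m → ℝ) :
    (Aᵀ *ᵥ x) ⬝ᵥ (Aᵀ *ᵥ x) ≤ sigma1 A ^ 2 * (x ⬝ᵥ x) := by
  have h := Matrix.l2_opNorm_mulVec Aᵀ (WithLp.toLp 2 x)
  have e : ‖Aᵀ‖ = ‖A‖ := by
    rw [← Matrix.conjTranspose_eq_transpose_of_trivial, Matrix.l2_opNorm_conjTranspose]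
  rw [e, ← aux_sigma] at h
  rw [← aux_norm, ← aux_norm, ← mul_pow]
  exact pow_le_pow_left₀ (norm_nonneg _) h 2

theorem aux_max {n : ℕ} (M : Matrix (Fin n) (Fin n) ℝ) (hM : M.IsHermitian) (x : Fin n → ℝ) :
    x ⬝ᵥ M *ᵥ x ≤ maxEig M * (x ⬝ᵥ x) := by
  have hH : (algebraMap ℝ (Matrix (Fin n) (Fin n) ℝ) (maxEig M) - M).IsHermitian := by
    refine Matrix.IsHermitian.sub ?_ hM
    rw [Matrix.algebraMap_eq_diagonal]
    exact Matrix.isHermitian_diagonal _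
  have hp := hH.posSemidef_iff_eigenvalues_nonneg.2 (fun i => by
    have h := hH.eigenvalues_mem_spectrum_real i
    set e := hH.eigenvalues i
    have h2 : maxEig M - e ∈ spectrum ℝ M := by
      rw [spectrum.mem_iff] at h ⊢
      intro hu
      apply h
      rw [← IsUnit.neg_iff]
      convert hu using 1
      rw [map_sub]; abel
    have := le_csSup (Matrix.finite_real_spectrum (A := M)).bddAbove h2
    change _ ≤ maxEig M at this
    simp only [Pi.zero_apply]
    linarith)
  have := hp.dotProduct_mulVec_nonneg x
  rw [Matrix.sub_mulVec, dotProduct_sub, Algebra.algebraMap_eq_smul_one, Matrix.smul_mulVec,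
    Matrix.one_mulVec, dotProduct_smul] at this
  simpa using this

theorem aux_min {n : ℕ} (M : Matrix (Fin n) (Fin n) ℝ) (hM : M.IsHermitian) (x : Fin n → ℝ) :
    minEig M * (x ⬝ᵥ x) ≤ x ⬝ᵥ M *ᵥ x := by
  have hH : (M - algebraMap ℝ (Matrix (Fin n) (Fin n) ℝ) (minEig M)).IsHermitian := by
    refine Matrix.IsHermitian.sub hM ?_
    rw [Matrix.algebraMap_eq_diagonal]
    exact Matrix.isHermitian_diagonal _
  have hp := hH.posSemidef_iff_eigenvalues_nonneg.2 (fun i => by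
    have h := hH.eigenvalues_mem_spectrum_real i
    set e := hH.eigenvalues i
    have h2 : e + minEig M ∈ spectrum ℝ M := by
      rw [spectrum.mem_iff] at h ⊢
      intro hu
      apply h
      convert hu using 1
      rw [map_add]; abel
    have := csInf_le (Matrix.finite_real_spectrum (A := M)).bddBelow h2
    change minEig M ≤ _ at this
    simp only [Pi.zero_apply]
    linarith)
  have := hp.dotProduct_mulVec_nonneg x
  rw [Matrix.sub_mulVec, dotProduct_sub, Algebra.algebraMap_eq_smul_one, Matrix.smul_mulVec,
    Matrix.one_mulVec, dotProduct_smul] at this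
  simpa using this

theorem aux_maxEig_nonneg {n : ℕ} (M : Matrix (Fin n) (Fin n) ℝ) (hM : M.PosDef) :
    0 ≤ maxEig M := by
  apply Real.sSup_nonneg
  intro x hx
  rw [hM.isHermitian.spectrum_real_eq_range_eigenvalues] at hx
  obtain ⟨i, rfl⟩ := hx
  exact (hM.eigenvalues_pos i).le

theorem aux_minEig_pos {n : ℕ} (hn : 0 < n) (M : Matrix (Fin n) (Fin n) ℝ) (hM : M.PosDef) :
    0 < minEig M := by
  haveI : Nonempty (Fin n) := ⟨⟨0, hn⟩⟩
  have hne : (spectrum ℝ M).Nonempty := by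
    rw [hM.isHermitian.spectrum_real_eq_range_eigenvalues]
    exact Set.range_nonempty _
  have hx : minEig M ∈ spectrum ℝ M := hne.csInf_mem (Matrix.finite_real_spectrum (A := M))
  rw [hM.isHermitian.spectrum_real_eq_range_eigenvalues] at hx
  obtain ⟨i, hi⟩ := hx
  rw [← hi]
  exact hM.eigenvalues_pos i

theorem aux_det {n : ℕ} (S : Matrix (Fin n) (Fin n) ℝ) (hS : S.PosDef) (c : ℝ)
    (h : ∀ x : Fin n → ℝ, x ⬝ᵥ S *ᵥ x ≤ c * (x ⬝ᵥ x)) : S.det ≤ c ^ n := by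
  have hb : ∀ i, hS.isHermitian.eigenvalues i ≤ c := by
    intro i
    have h1 := h (hS.isHermitian.eigenvectorBasis i)
    have h2 := aux_norm (hS.isHermitian.eigenvectorBasis i).ofLp
    have h3 : ‖hS.isHermitian.eigenvectorBasis i‖ = 1 :=
      hS.isHermitian.eigenvectorBasis.orthonormal.1 i
    rw [WithLp.toLp_ofLp, h3] at h2
    rw [hS.isHermitian.mulVec_eigenvectorBasis, dotProduct_smul, ← h2] at h1
    simpa using h1
  rw [hS.isHermitian.det_eq_prod_eigenvalues]
  calc ∏ i, ((hS.isHermitian.eigenvalues i : ℝ) : ℝ) ≤ ∏ _i : Fin n, c :=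
        Finset.prod_le_prod (fun i _ => (hS.eigenvalues_pos i).le) (fun i _ => hb i)
    _ = c ^ n := by simp

theorem aux_inv {n : ℕ} (S : Matrix (Fin n) (Fin n) ℝ) (hS : S.PosDef) (c : ℝ) (hc : 0 < c)
    (h : ∀ x : Fin n → ℝ, c * (x ⬝ᵥ x) ≤ x ⬝ᵥ S *ᵥ x) (v : Fin n → ℝ) :
    v ⬝ᵥ S⁻¹ *ᵥ v ≤ (v ⬝ᵥ v) * c⁻¹ := by
  have hv : S *ᵥ (S⁻¹ *ᵥ v) = v := by
    rw [Matrix.mulVec_mulVec, Matrix.mul_nonsing_inv _ hS.det_pos.ne'.isUnit, Matrix.one_mulVec]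
  have h1 := h (S⁻¹ *ᵥ v)
  rw [hv, dotProduct_comm _ v] at h1
  set w := S⁻¹ *ᵥ v
  have h2 : 0 ≤ (v - c • w) ⬝ᵥ (v - c • w) := by
    rw [← aux_norm]; positivity
  simp only [sub_dotProduct, dotProduct_sub, smul_dotProduct, dotProduct_smul, smul_eq_mul,
    dotProduct_comm w v] at h2
  rw [← div_eq_mul_inv, le_div_iff₀ hc]
  nlinarith

theorem aux_quad {m n : ℕ} (T : Matrix (Fin m) (Fin n) ℝ) (M : Matrix (Fin n) (Fin n) ℝ)
    (hM : M.PosDef) (x : Fin m → ℝ) :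
    x ⬝ᵥ (T * M * Tᵀ) *ᵥ x ≤ (sigma1 T ^ 2 * maxEig M) * (x ⬝ᵥ x) := by
  have e : x ⬝ᵥ (T * M * Tᵀ) *ᵥ x = (Tᵀ *ᵥ x) ⬝ᵥ M *ᵥ (Tᵀ *ᵥ x) := by
    rw [← Matrix.mulVec_mulVec, ← Matrix.mulVec_mulVec, Matrix.dotProduct_mulVec,
      ← Matrix.mulVec_transpose]
  rw [e]
  calc _ ≤ maxEig M * ((Tᵀ *ᵥ x) ⬝ᵥ (Tᵀ *ᵥ x)) := aux_max M hM.isHermitian _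
    _ ≤ maxEig M * (sigma1 T ^ 2 * (x ⬝ᵥ x)) :=
      mul_le_mul_of_nonneg_left (aux_mulVec T x) (aux_maxEig_nonneg M hM)
    _ = _ := by ring

/-- In the linear Gaussian model (`T = A + BH`,
`μ_y = Tμ_x`, `Σ_y = TΣ_xTᵀ + BQBᵀ + R`,
`π₀(l_y) = √(|R|/|Σ_y|)·exp{−(1/2)(y−μ_y)ᵀΣ_y⁻¹(y−μ_y)}`), for every `r > 0` and every
`y` with `‖y − μ_y‖ ≤ r`,
`1/π₀(l_y) ≤ ([ (σ₁(A)+σ₁(B)σ₁(H))²λ₁(Σ_x) + σ₁(B)²λ₁(Q) + λ₁(R) ]^{d_y}/|R|)^{1/2}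
  · exp((1/2)·d_y³·r²·λ_min(R)⁻¹)`. -/
theorem stmt15 {dx dy dz : ℕ}
    (A : Matrix (Fin dy) (Fin dx) ℝ) (B : Matrix (Fin dy) (Fin dz) ℝ)
    (H : Matrix (Fin dz) (Fin dx) ℝ)
    (Sx : Matrix (Fin dx) (Fin dx) ℝ) (Q : Matrix (Fin dz) (Fin dz) ℝ)
    (R : Matrix (Fin dy) (Fin dy) ℝ)
    (hSx : Sx.PosDef) (hQ : Q.PosDef) (hR : R.PosDef)
    (hT : ((A + B * H) * Sx * (A + B * H)ᵀ).PosDef)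
    (hBQ : (B * Q * Bᵀ).PosDef)
    (μx : Fin dx → ℝ) (r : ℝ) (hr : 0 < r) (y : Fin dy → ℝ)
    (hy : Real.sqrt (∑ i, (y i - ((A + B * H) *ᵥ μx) i) ^ 2) ≤ r) :
    (Real.sqrt (R.det / ((A + B * H) * Sx * (A + B * H)ᵀ + B * Q * Bᵀ + R).det) *
          Real.exp (-(1 / 2) *
            ((y - (A + B * H) *ᵥ μx) ⬝ᵥ
              ((A + B * H) * Sx * (A + B * H)ᵀ + B * Q * Bᵀ + R)⁻¹ *ᵥ
                (y - (A + B * H) *ᵥ μx))))⁻¹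
      ≤ Real.sqrt
            (((sigma1 A + sigma1 B * sigma1 H) ^ 2 * maxEig Sx
                + sigma1 B ^ 2 * maxEig Q + maxEig R) ^ dy / R.det) *
          Real.exp ((1 / 2) * (dy : ℝ) ^ 3 * r ^ 2 * (minEig R)⁻¹) := by
  set T := A + B * H with hTdef
  set S := T * Sx * Tᵀ + B * Q * Bᵀ + R with hSdef
  set v := y - T *ᵥ μx with hvdef
  have hS : S.PosDef := (hT.add hBQ).add hR
  have hvr : v ⬝ᵥ v ≤ r ^ 2 := by
    have := (Real.sqrt_le_left hr.le).1 hy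
    simpa [dotProduct, hvdef, sq] using this
  have hdet : S.det ≤ ((sigma1 A + sigma1 B * sigma1 H) ^ 2 * maxEig Sx
                + sigma1 B ^ 2 * maxEig Q + maxEig R) ^ dy := by
    apply aux_det S hS
    intro x
    have h0 : 0 ≤ x ⬝ᵥ x := by rw [← aux_norm]; positivity
    have h1 := aux_quad T Sx hSx x
    have h2 := aux_quad B Q hQ x
    have h3 := aux_max R hR.isHermitian x
    have h4 : sigma1 T ^ 2 * maxEig Sx ≤
        (sigma1 A + sigma1 B * sigma1 H) ^ 2 * maxEig Sx :=
      mul_le_mul_of_nonneg_right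
        (pow_le_pow_left₀ (norm_nonneg _) (aux_sigma_T A B H) 2) (aux_maxEig_nonneg Sx hSx)
    have h5 := mul_le_mul_of_nonneg_right h4 h0
    rw [hSdef, Matrix.add_mulVec, Matrix.add_mulVec, dotProduct_add, dotProduct_add]
    linarith
  have hexp : v ⬝ᵥ S⁻¹ *ᵥ v ≤ (dy : ℝ) ^ 3 * r ^ 2 * (minEig R)⁻¹ := by
    rcases Nat.eq_zero_or_pos dy with h0 | hpos
    · subst h0
      simp [dotProduct]
    · have hm := aux_minEig_pos hpos R hR
      have h1 : v ⬝ᵥ S⁻¹ *ᵥ v ≤ (v ⬝ᵥ v) * (minEig R)⁻¹ := by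
        apply aux_inv S hS _ hm
        intro x
        have h1 := hT.posSemidef.dotProduct_mulVec_nonneg x
        have h2 := hBQ.posSemidef.dotProduct_mulVec_nonneg x
        have h3 := aux_min R hR.isHermitian x
        rw [star_trivial] at h1 h2
        rw [hSdef, Matrix.add_mulVec, Matrix.add_mulVec, dotProduct_add, dotProduct_add]
        linarith
      refine h1.trans (mul_le_mul_of_nonneg_right (hvr.trans ?_) (inv_nonneg.2 hm.le))
      have h4 : (1 : ℝ) ≤ (dy : ℝ) ^ 3 := one_le_pow₀ (by exact_mod_cast hpos)
      nlinarith [sq_nonneg r]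
  rw [mul_inv, ← Real.sqrt_inv, inv_div, ← Real.exp_neg]
  refine mul_le_mul (Real.sqrt_le_sqrt ?_) (Real.exp_le_exp.2 ?_) (Real.exp_pos _).le
    (Real.sqrt_nonneg _)
  · exact div_le_div_of_nonneg_right hdet hR.det_pos.le
  · linarith

end
end
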